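/- The function δ defined on pairs of m×m positive definite complex matrices by δ(A,B) = ‖log(A^{-1/2} B A^{-1/2})‖₂ is a metric on the set of positive definite matrices: δ(A,B) ≥ 0 with equality iff A = B, δ(A,B) = δ(B,A), and δ(A,C) ≤ δ(A,B) + δ(B,C) for all positive definite A, B, C. -/

import Mathlib

/-!
In the coordinates `B = √A * exp X * √A` around `A`, the distance from `A` to `B` is the
Frobenius norm of `X`, and `t ↦ √A * exp (t • X) * √A` is the geodesic from `A` to `B`. Any
factorization `A = T * Tᴴ` may replace `√A`, because `T` and `√A` differ by a unitary factor,
which rotates `X` and keeps its norm. Hence a geodesic seen from another of its points is again a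
geodesic, with a velocity of the same norm; seen from its other end, this is the symmetry of the
distance.

For the triangle inequality, congruence by `A^{-1/2}` reduces to the case `A = 1`, that is, to
`‖log (√Q * exp X * √Q)‖ ≤ ‖log Q‖ + ‖X‖`. Along the geodesic `P t = √Q * exp (t • X) * √Q`, the
function `φ t = ‖log (P t)‖ ^ 2` has derivative `2 * re tr (Y * log (P t))`, where `Y` is the
velocity seen from `P t`. By Cauchy–Schwarz this is at most `2 * ‖X‖ * √(φ t)`, so that `√φ`
grows at most at speed `‖X‖`.

The derivative is found without differentiating `log` on matrices. The scalar inequality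
`|log² p - log² q - 2 log q (p / q - 1)| ≤ (1 + 2 |log q|) (p / q + q / p - 2)`, averaged over
the squared moduli of the inner products of the eigenvectors of `√Q * exp Y * √Q` and `Q`, bounds
the error of the first-order expansion of `‖log (√Q * exp Y * √Q)‖ ^ 2` by
`re tr ((exp Y + exp (-Y) - 2) * (1 + 2 |log Q|))`, which vanishes to second order at `Y = 0`.
-/

open Matrix
open scoped ComplexOrder

noncomputable def matFun {m : ℕ} (f : ℝ → ℝ) (A : Matrix (Fin m) (Fin m) ℂ) :
    Matrix (Fin m) (Fin m) ℂ :=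
  if hA : A.IsHermitian then
    (hA.eigenvectorUnitary : Matrix (Fin m) (Fin m) ℂ) *
      Matrix.diagonal (fun i => (f (hA.eigenvalues i) : ℂ)) *
      (star (hA.eigenvectorUnitary : Matrix (Fin m) (Fin m) ℂ))
  else 0

/-- The unique positive definite square root of a positive definite matrix
(realized via the spectral decomposition). -/
noncomputable def msqrt {m : ℕ} (A : Matrix (Fin m) (Fin m) ℂ) : Matrix (Fin m) (Fin m) ℂ :=
  matFun Real.sqrt A

/-- The logarithm of a positive definite matrix: the unique Hermitian `L` with `exp L = A`. -/
noncomputable def mlog {m : ℕ} (A : Matrix (Fin m) (Fin m) ℂ) : Matrix (Fin m) (Fin m) ℂ :=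
  matFun Real.log A

/-- The real power `A ^ t` of a positive definite matrix, via the spectral decomposition. -/
noncomputable def mpow {m : ℕ} (A : Matrix (Fin m) (Fin m) ℂ) (t : ℝ) : Matrix (Fin m) (Fin m) ℂ :=
  matFun (fun x => x ^ t) A

/-- The matrix geometric mean `A # B`. -/
noncomputable def gmean {m : ℕ} (A B : Matrix (Fin m) (Fin m) ℂ) : Matrix (Fin m) (Fin m) ℂ :=
  msqrt A * msqrt ((msqrt A)⁻¹ * B * (msqrt A)⁻¹) * msqrt A

/-- The weighted geometric mean `A #_t B`. -/
noncomputable def wgmean {m : ℕ} (A B : Matrix (Fin m) (Fin m) ℂ) (t : ℝ) :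
    Matrix (Fin m) (Fin m) ℂ :=
  msqrt A * mpow ((msqrt A)⁻¹ * B * (msqrt A)⁻¹) t * msqrt A

/-- The Frobenius (Hilbert–Schmidt) norm `‖X‖₂ = (Tr(X*X))^{1/2}`. -/
noncomputable def fnorm {m : ℕ} (X : Matrix (Fin m) (Fin m) ℂ) : ℝ :=
  Real.sqrt ((Xᴴ * X).trace.re)

/-- The Riemannian metric `δ(A,B) = ‖log(A^{-1/2} B A^{-1/2})‖₂`. -/
noncomputable def rdist {m : ℕ} (A B : Matrix (Fin m) (Fin m) ℂ) : ℝ :=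
  fnorm (mlog ((msqrt A)⁻¹ * B * (msqrt A)⁻¹))

/-- The Loewner order: `A ≤ B` iff `B - A` is positive semidefinite. -/
def Loewner {m : ℕ} (A B : Matrix (Fin m) (Fin m) ℂ) : Prop :=
  (B - A).PosSemidef

theorem sq_log_le_add_inv_sub_two {s : ℝ} (hs : 0 < s) : Real.log s ^ 2 ≤ s + s⁻¹ - 2 := by
  set u := Real.log s / 2 with hu
  have habs : |u| ≤ |Real.sinh u| := by
    rw [Real.abs_sinh]
    exact Real.self_le_sinh_iff.mpr (abs_nonneg u)
  have hsinh : 4 * Real.sinh u ^ 2 = s + s⁻¹ - 2 := by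
    have hexp : Real.exp u * Real.exp u = s := by
      rw [← Real.exp_add, hu, add_halves, Real.exp_log hs]
    have hinv : Real.exp (-u) * Real.exp (-u) = s⁻¹ := by
      rw [Real.exp_neg, ← mul_inv, hexp]
    have hone : Real.exp u * Real.exp (-u) = 1 := by
      rw [← Real.exp_add, add_neg_cancel, Real.exp_zero]
    rw [Real.sinh_eq]
    linear_combination hexp + hinv - 2 * hone
  calc Real.log s ^ 2 = 4 * u ^ 2 := by rw [hu]; ring
    _ ≤ 4 * Real.sinh u ^ 2 := by gcongr 4 * ?_; exact sq_le_sq.mpr habs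
    _ = s + s⁻¹ - 2 := hsinh

theorem abs_log_sub_sub_one_le {s : ℝ} (hs : 0 < s) :
    |Real.log s - (s - 1)| ≤ s + s⁻¹ - 2 := by
  rw [abs_le]
  constructor <;> linarith [Real.log_le_sub_one_of_pos hs, Real.one_sub_inv_le_log_of_pos hs]

theorem abs_sq_log_sub_sq_log_sub_le {p q : ℝ} (hp : 0 < p) (hq : 0 < q) :
    |Real.log p ^ 2 - Real.log q ^ 2 - 2 * Real.log q * (p * q⁻¹ - 1)| ≤
      (1 + 2 * |Real.log q|) * (p * q⁻¹ + q * p⁻¹ - 2) := by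
  set s := p * q⁻¹ with hs
  have hs_pos : 0 < s := by positivity
  have hs_inv : q * p⁻¹ = s⁻¹ := by rw [hs, mul_inv, inv_inv, mul_comm]
  have hlog : Real.log p = Real.log q + Real.log s := by
    rw [hs, Real.log_mul hp.ne' (inv_ne_zero hq.ne'), Real.log_inv]; ring
  rw [hs_inv, hlog]
  calc |(Real.log q + Real.log s) ^ 2 - Real.log q ^ 2 - 2 * Real.log q * (s - 1)|
      = |Real.log s ^ 2 + 2 * Real.log q * (Real.log s - (s - 1))| := by ring_nf
    _ ≤ |Real.log s ^ 2| + |2 * Real.log q * (Real.log s - (s - 1))| := abs_add_le _ _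
    _ = Real.log s ^ 2 + 2 * |Real.log q| * |Real.log s - (s - 1)| := by
      rw [abs_of_nonneg (sq_nonneg _), abs_mul, abs_mul, abs_two]
    _ ≤ (s + s⁻¹ - 2) + 2 * |Real.log q| * (s + s⁻¹ - 2) := by
      gcongr
      exacts [sq_log_le_add_inv_sub_two hs_pos, abs_log_sub_sub_one_le hs_pos]
    _ = (1 + 2 * |Real.log q|) * (s + s⁻¹ - 2) := by ring

theorem hasDerivAt_of_abs_sub_le {f g e : ℝ → ℝ} {d x : ℝ} (hfg : ∀ y, |f y - g y| ≤ e y)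
    (he : HasDerivAt e 0 x) (hex : e x = 0) (hg : HasDerivAt g d x) : HasDerivAt f d x := by
  have hx : f x - g x = 0 := abs_nonpos_iff.mp (hex ▸ hfg x)
  have hlittle : (fun y => f y - g y) =o[nhds x] fun y => y - x := by
    refine Asymptotics.IsBigO.trans_isLittleO (.of_norm_le hfg) ?_
    simpa only [hex, sub_zero, smul_zero] using he.isLittleO
  have hsub : HasDerivAt (fun y => f y - g y) 0 x := by
    rw [hasDerivAt_iff_isLittleO]
    simpa only [hx, sub_zero, smul_zero] using hlittle
  simpa only [add_sub_cancel, add_zero] using hg.fun_add hsub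

theorem sqrt_le_sqrt_add_mul_of_hasDerivAt_le {φ φ' : ℝ → ℝ} {L a b : ℝ} (hab : a ≤ b)
    (hφ_nonneg : ∀ t, 0 ≤ φ t) (hφ : ∀ t, HasDerivAt φ (φ' t) t)
    (hφ' : ∀ t, φ' t ≤ 2 * L * √(φ t)) (hL : 0 ≤ L) : √(φ b) ≤ √(φ a) + L * (b - a) := by
  have hreg : ∀ ε > 0, √(φ b + ε) ≤ √(φ a + ε) + L * (b - a) := by
    intro ε hε
    have hpos : ∀ t, 0 < φ t + ε := fun t => add_pos_of_nonneg_of_pos (hφ_nonneg t) hε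
    have hderiv : ∀ t, HasDerivAt (fun t => √(φ t + ε)) (φ' t / (2 * √(φ t + ε))) t :=
      fun t => ((hφ t).add_const ε).sqrt (hpos t).ne'
    have hbound : ∀ t, φ' t / (2 * √(φ t + ε)) ≤ L := by
      intro t
      rw [div_le_iff₀ (by have := Real.sqrt_pos.mpr (hpos t); positivity)]
      calc φ' t ≤ 2 * L * √(φ t) := hφ' t
        _ ≤ 2 * L * √(φ t + ε) := by gcongr; linarith
        _ = L * (2 * √(φ t + ε)) := by ring
    have hdiff : Differentiable ℝ fun t => √(φ t + ε) := fun t => (hderiv t).differentiableAt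
    have := image_sub_le_mul_sub_of_deriv_le hdiff
      (fun t => (hderiv t).deriv.trans_le (hbound t)) hab
    linarith
  have hlim : ∀ c : ℝ, Filter.Tendsto (fun ε => √(c + ε)) (nhdsWithin 0 (Set.Ioi 0)) (nhds √c) := by
    intro c
    have : Continuous fun ε : ℝ => √(c + ε) := by fun_prop
    simpa only [add_zero] using (this.tendsto 0).mono_left nhdsWithin_le_nhds
  exact le_of_tendsto_of_tendsto (hlim _) ((hlim _).add_const _)
    (Filter.eventually_of_mem self_mem_nhdsWithin hreg)

section Frobenius

open scoped Matrix.Norms.Frobenius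

variable {m n 𝕜 : Type*} [Fintype m] [Fintype n] [RCLike 𝕜]

theorem sq_frobenius_norm_eq_re_trace (X : Matrix m n 𝕜) : ‖X‖ ^ 2 = RCLike.re (Xᴴ * X).trace := by
  rw [frobenius_norm_def, ← Real.sqrt_eq_rpow, Real.sq_sqrt (by positivity), Finset.sum_comm, trace,
    map_sum]
  refine Finset.sum_congr rfl fun j _ => ?_
  rw [diag_apply, mul_apply, map_sum]
  refine Finset.sum_congr rfl fun i _ => ?_
  rw [conjTranspose_apply, RCLike.star_def, RCLike.conj_mul]
  norm_cast

theorem re_trace_conjTranspose_mul_le (X Y : Matrix m n 𝕜) :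
    RCLike.re (Xᴴ * Y).trace ≤ ‖X‖ * ‖Y‖ := by
  have hadd : ‖X + Y‖ ^ 2 = ‖X‖ ^ 2 + ‖Y‖ ^ 2 + 2 * RCLike.re (Xᴴ * Y).trace := by
    have hsymm : RCLike.re (Yᴴ * X).trace = RCLike.re (Xᴴ * Y).trace := by
      rw [← RCLike.conj_re, ← RCLike.star_def, ← trace_conjTranspose, conjTranspose_mul,
        conjTranspose_conjTranspose]
    simp only [sq_frobenius_norm_eq_re_trace, conjTranspose_add, Matrix.add_mul, Matrix.mul_add,
      trace_add, map_add, hsymm]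
    ring
  have := pow_le_pow_left₀ (norm_nonneg _) (norm_add_le X Y) 2
  linarith

theorem frobenius_norm_unitary_conj [DecidableEq n] (W : unitary (Matrix n n 𝕜))
    (X : Matrix n n 𝕜) :
    ‖(W : Matrix n n 𝕜) * X * star (W : Matrix n n 𝕜)‖ = ‖X‖ := by
  rw [← sq_eq_sq₀ (norm_nonneg _) (norm_nonneg _), sq_frobenius_norm_eq_re_trace,
    sq_frobenius_norm_eq_re_trace]
  set V := (W : Matrix n n 𝕜)
  have hV : Vᴴ * V = 1 := Unitary.coe_star_mul_self W
  have : (V * X * star V)ᴴ * (V * X * star V) = V * (Xᴴ * X * star V) := by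
    simp only [star_eq_conjTranspose, conjTranspose_mul, conjTranspose_conjTranspose]
    simp only [Matrix.mul_assoc, ← Matrix.mul_assoc Vᴴ V, hV, Matrix.one_mul]
  rw [this, trace_mul_comm, Matrix.mul_assoc, star_eq_conjTranspose, hV, Matrix.mul_one]

end Frobenius

section Matrices

open scoped Matrix.Norms.Frobenius MatrixOrder

variable {n 𝕜 : Type*} [Fintype n] [DecidableEq n] [RCLike 𝕜] {A B C X Y : Matrix n n 𝕜}

theorem cfc_mul_cfc (f g : ℝ → ℝ) (A : Matrix n n 𝕜) :
    cfc f A * cfc g A = cfc (fun x => f x * g x) A :=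
  (cfc_mul f g A (A.finite_real_spectrum.continuousOn _)
    (A.finite_real_spectrum.continuousOn _)).symm

theorem cfc_cfc (f g : ℝ → ℝ) (hA : A.IsHermitian) :
    cfc f (cfc g A) = cfc (fun x => f (g x)) A :=
  (cfc_comp' f g A ((A.finite_real_spectrum.image g).continuousOn f)
    (A.finite_real_spectrum.continuousOn g) hA).symm

theorem isHermitian_cfc (f : ℝ → ℝ) (A : Matrix n n 𝕜) : (cfc f A).IsHermitian :=
  cfc_predicate f A

theorem cfc_congr_of_posDef {f g : ℝ → ℝ} (hA : A.PosDef) (h : ∀ x, 0 < x → f x = g x) :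
    cfc f A = cfc g A :=
  cfc_congr fun x hx => h x (hA.isStrictlyPositive.spectrum_pos hx)

theorem posDef_cfc {f : ℝ → ℝ} (hA : A.IsHermitian) (h : ∀ x ∈ spectrum ℝ A, 0 < f x) :
    (cfc f A).PosDef := by
  rw [← isStrictlyPositive_iff_posDef]
  refine IsUnit.isStrictlyPositive ?_ (cfc_nonneg fun x hx => (h x hx).le)
  exact (isUnit_cfc_iff f A (A.finite_real_spectrum.continuousOn _) hA).mpr
    fun x hx => (h x hx).ne'

theorem inv_cfc {f : ℝ → ℝ} (hA : A.IsHermitian) (h : ∀ x ∈ spectrum ℝ A, f x ≠ 0) :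
    (cfc f A)⁻¹ = cfc (fun x => (f x)⁻¹) A := by
  refine inv_eq_right_inv ?_
  rw [cfc_mul_cfc, ← cfc_one ℝ A hA]
  exact cfc_congr fun x hx => mul_inv_cancel₀ (h x hx)

theorem cfc_unitary_conj (f : ℝ → ℝ) (W : unitary (Matrix n n 𝕜)) (hX : X.IsHermitian) :
    cfc f (W * X * star (W : Matrix n n 𝕜)) = W * cfc f X * star (W : Matrix n n 𝕜) := by
  have hcont : Continuous (Unitary.conjStarAlgAut 𝕜 (Matrix n n 𝕜) W) := by
    change Continuous fun M : Matrix n n 𝕜 => (W : Matrix n n 𝕜) * M * star (W : Matrix n n 𝕜)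
    fun_prop
  exact (StarAlgHomClass.map_cfc (S := 𝕜) (p := IsSelfAdjoint) (q := IsSelfAdjoint)
    (Unitary.conjStarAlgAut 𝕜 _ W) f X (X.finite_real_spectrum.continuousOn _) hcont hX
    (hX.isSelfAdjoint.map _)).symm

theorem cfc_eq_eigenvectorUnitary_mul (f : ℝ → ℝ) (hA : A.IsHermitian) :
    cfc f A = (hA.eigenvectorUnitary : Matrix n n 𝕜) *
      diagonal (fun i => (f (hA.eigenvalues i) : 𝕜)) *
      star (hA.eigenvectorUnitary : Matrix n n 𝕜) := by
  rw [hA.cfc_eq, Matrix.IsHermitian.cfc, Unitary.conjStarAlgAut_apply]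
  rfl

/-! ### Traces and pairs of eigenvalues -/

theorem re_trace_cfc_mul (f : ℝ → ℝ) (hA : A.IsHermitian) (M : Matrix n n 𝕜) :
    RCLike.re (cfc f A * M).trace = ∑ i, f (hA.eigenvalues i) *
      RCLike.re ((star (hA.eigenvectorUnitary : Matrix n n 𝕜) * M *
        (hA.eigenvectorUnitary : Matrix n n 𝕜)) i i) := by
  rw [cfc_eq_eigenvectorUnitary_mul f hA]
  set U := (hA.eigenvectorUnitary : Matrix n n 𝕜)
  set D := diagonal (fun i => (f (hA.eigenvalues i) : 𝕜)) with hD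
  have hcyc : (U * D * star U * M).trace = (D * (star U * M * U)).trace := by
    rw [Matrix.mul_assoc U, Matrix.mul_assoc U, trace_mul_comm]
    simp only [Matrix.mul_assoc]
  rw [hcyc, trace, map_sum]
  simp only [hD, diag_apply, diagonal_mul, RCLike.re_ofReal_mul]

theorem re_trace_cfc_mul_cfc (f g : ℝ → ℝ) (hA : A.IsHermitian) (hB : B.IsHermitian) :
    RCLike.re (cfc f A * cfc g B).trace = ∑ i, ∑ j,
      ‖(star (hA.eigenvectorUnitary : Matrix n n 𝕜) *
        (hB.eigenvectorUnitary : Matrix n n 𝕜)) i j‖ ^ 2 *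
      (f (hA.eigenvalues i) * g (hB.eigenvalues j)) := by
  rw [re_trace_cfc_mul f hA, cfc_eq_eigenvectorUnitary_mul g hB]
  set U := (hA.eigenvectorUnitary : Matrix n n 𝕜)
  set V := (hB.eigenvectorUnitary : Matrix n n 𝕜)
  set D := diagonal (fun i => (g (hB.eigenvalues i) : 𝕜)) with hD
  have hconj : star U * (V * D * star V) * U = (star U * V) * D * (star U * V)ᴴ := by
    simp only [← star_eq_conjTranspose, star_mul, star_star, Matrix.mul_assoc]
  refine Finset.sum_congr rfl fun i _ => ?_
  rw [hconj, mul_apply, map_sum, Finset.mul_sum]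
  refine Finset.sum_congr rfl fun j _ => ?_
  rw [hD, mul_diagonal, conjTranspose_apply, mul_right_comm, RCLike.star_def, RCLike.mul_conj]
  norm_cast
  ring

theorem sum_mul_re_trace_cfc_mul_cfc {ι : Type*} (s : Finset ι) (c : ι → ℝ) (f g : ι → ℝ → ℝ)
    (hA : A.IsHermitian) (hB : B.IsHermitian) :
    ∑ k ∈ s, c k * RCLike.re (cfc (f k) A * cfc (g k) B).trace = ∑ i, ∑ j,
      ‖(star (hA.eigenvectorUnitary : Matrix n n 𝕜) *
        (hB.eigenvectorUnitary : Matrix n n 𝕜)) i j‖ ^ 2 *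
      ∑ k ∈ s, c k * (f k (hA.eigenvalues i) * g k (hB.eigenvalues j)) := by
  simp only [re_trace_cfc_mul_cfc _ _ hA hB, Finset.mul_sum]
  rw [Finset.sum_comm]
  refine Finset.sum_congr rfl fun i _ => ?_
  rw [Finset.sum_comm]
  simp only [mul_left_comm]

/-- The weights `‖⟨uᵢ, vⱼ⟩‖ ^ 2` built from eigenvectors `uᵢ` of `A` and `vⱼ` of `B` are
nonnegative, so that inequalities between pairs of eigenvalues pass to traces, as in Klein's
inequality. -/
theorem abs_sum_mul_re_trace_cfc_mul_cfc_le {ι κ : Type*} {s : Finset ι} {t : Finset κ}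
    {c : ι → ℝ} {f g : ι → ℝ → ℝ} {c' : κ → ℝ} {f' g' : κ → ℝ → ℝ}
    (hA : A.IsHermitian) (hB : B.IsHermitian)
    (h : ∀ a ∈ spectrum ℝ A, ∀ b ∈ spectrum ℝ B,
      |∑ k ∈ s, c k * (f k a * g k b)| ≤ ∑ l ∈ t, c' l * (f' l a * g' l b)) :
    |∑ k ∈ s, c k * RCLike.re (cfc (f k) A * cfc (g k) B).trace| ≤
      ∑ l ∈ t, c' l * RCLike.re (cfc (f' l) A * cfc (g' l) B).trace := by
  rw [sum_mul_re_trace_cfc_mul_cfc s c f g hA hB, sum_mul_re_trace_cfc_mul_cfc t c' f' g' hA hB]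
  refine (Finset.abs_sum_le_sum_abs _ _).trans (Finset.sum_le_sum fun i _ => ?_)
  refine (Finset.abs_sum_le_sum_abs _ _).trans (Finset.sum_le_sum fun j _ => ?_)
  rw [abs_mul, abs_of_nonneg (sq_nonneg _)]
  exact mul_le_mul_of_nonneg_left
    (h _ (hA.eigenvalues_mem_spectrum_real i) _ (hB.eigenvalues_mem_spectrum_real j))
    (sq_nonneg _)

/-! ### The Riemannian exponential map -/

/-- The Riemannian exponential map at the positive definite matrix `A`. A tangent vector is given in
the form `√A * X * √A`, so that its Riemannian length is the Frobenius norm of `X`; the geodesics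
through `A` are `t ↦ riemannExp A (t • X)`. -/
noncomputable def riemannExp (A X : Matrix n n 𝕜) : Matrix n n 𝕜 :=
  cfc Real.sqrt A * cfc Real.exp X * cfc Real.sqrt A

/-- The inverse of `riemannExp A`, sending `B` to the initial velocity of the geodesic from `A`
to `B`. -/
noncomputable def riemannLog (A B : Matrix n n 𝕜) : Matrix n n 𝕜 :=
  cfc Real.log ((cfc Real.sqrt A)⁻¹ * B * (cfc Real.sqrt A)⁻¹)

theorem posDef_cfc_sqrt (hA : A.PosDef) : (cfc Real.sqrt A).PosDef :=
  posDef_cfc hA.isHermitian fun _ hx => Real.sqrt_pos.mpr (hA.isStrictlyPositive.spectrum_pos hx)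

theorem posDef_cfc_exp (hX : X.IsHermitian) : (cfc Real.exp X).PosDef :=
  posDef_cfc hX fun _ _ => Real.exp_pos _

theorem cfc_sqrt_mul_cfc_mul_cfc_sqrt (f : ℝ → ℝ) (hA : A.PosDef) :
    cfc Real.sqrt A * cfc f A * cfc Real.sqrt A = cfc (fun x => x * f x) A := by
  rw [cfc_mul_cfc, cfc_mul_cfc]
  refine cfc_congr_of_posDef hA fun x hx => ?_
  rw [mul_right_comm, Real.mul_self_sqrt hx.le]

theorem cfc_sqrt_mul_cfc_sqrt (hA : A.PosDef) : cfc Real.sqrt A * cfc Real.sqrt A = A := by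
  rw [cfc_mul_cfc]
  conv_rhs => rw [← cfc_id' ℝ A hA.isHermitian]
  exact cfc_congr_of_posDef hA fun x hx => Real.mul_self_sqrt hx.le

theorem inv_cfc_sqrt_mul_mul_inv_cfc_sqrt (hA : A.PosDef) :
    (cfc Real.sqrt A)⁻¹ * A * (cfc Real.sqrt A)⁻¹ = 1 := by
  have hdet := (isUnit_iff_isUnit_det _).mp (posDef_cfc_sqrt hA).isUnit
  nth_rw 2 [← cfc_sqrt_mul_cfc_sqrt hA]
  rw [nonsing_inv_mul_cancel_left _ _ hdet, mul_nonsing_inv _ hdet]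

theorem inv_cfc_sqrt_mul_cfc_mul_inv_cfc_sqrt (f : ℝ → ℝ) (hA : A.PosDef) :
    (cfc Real.sqrt A)⁻¹ * cfc f A * (cfc Real.sqrt A)⁻¹ = cfc (fun x => x⁻¹ * f x) A := by
  rw [inv_cfc hA.isHermitian fun x hx =>
    (Real.sqrt_pos.mpr (hA.isStrictlyPositive.spectrum_pos hx)).ne', cfc_mul_cfc, cfc_mul_cfc]
  refine cfc_congr_of_posDef hA fun x hx => ?_
  rw [mul_right_comm, ← mul_inv, Real.mul_self_sqrt hx.le]

theorem cfc_exp_neg (hX : X.IsHermitian) : cfc Real.exp (-X) = (cfc Real.exp X)⁻¹ := by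
  rw [inv_cfc hX fun _ _ => Real.exp_ne_zero _, ← cfc_comp_neg Real.exp X]
  simp only [Real.exp_neg]

theorem cfc_exp_smul (t : ℝ) (hX : X.IsHermitian) :
    cfc Real.exp (t • X) = cfc (fun x => Real.exp (t * x)) X :=
  (cfc_comp_smul t Real.exp X).symm

theorem cfc_exp_add_smul (s t : ℝ) (hX : X.IsHermitian) :
    cfc Real.exp ((s + t) • X) = cfc Real.exp (s • X) * cfc Real.exp (t • X) := by
  simp only [cfc_exp_smul _ hX, cfc_mul_cfc, add_mul, Real.exp_add]

theorem cfc_log_cfc_exp (hX : X.IsHermitian) : cfc Real.log (cfc Real.exp X) = X := by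
  simp only [cfc_cfc _ _ hX, Real.log_exp]
  exact cfc_id' ℝ X hX

theorem cfc_exp_cfc_log (hA : A.PosDef) : cfc Real.exp (cfc Real.log A) = A := by
  rw [cfc_cfc _ _ hA.isHermitian, cfc_congr_of_posDef hA fun _ => Real.exp_log,
    cfc_id' ℝ A hA.isHermitian.isSelfAdjoint]

omit [DecidableEq n] in
theorem posDef_mul_mul_self (hA : A.PosDef) (hB : B.PosDef) : (A * B * A).PosDef := by
  classical
  have h := (Matrix.IsUnit.posDef_star_right_conjugate_iff hA.isUnit).mpr hB
  rwa [star_eq_conjTranspose, hA.isHermitian.eq] at h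

theorem isHermitian_riemannLog (A B : Matrix n n 𝕜) : (riemannLog A B).IsHermitian :=
  isHermitian_cfc _ _

theorem posDef_riemannExp (hA : A.PosDef) (hX : X.IsHermitian) : (riemannExp A X).PosDef :=
  posDef_mul_mul_self (posDef_cfc_sqrt hA) (posDef_cfc_exp hX)

theorem riemannExp_zero (hA : A.PosDef) : riemannExp A 0 = A := by
  rw [riemannExp, cfc_apply_zero, Real.exp_zero, map_one, Matrix.mul_one, cfc_sqrt_mul_cfc_sqrt hA]

theorem riemannExp_riemannLog (hA : A.PosDef) (hB : B.PosDef) :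
    riemannExp A (riemannLog A B) = B := by
  have hdet := (isUnit_iff_isUnit_det _).mp (posDef_cfc_sqrt hA).isUnit
  rw [riemannExp, riemannLog, cfc_exp_cfc_log (posDef_mul_mul_self (posDef_cfc_sqrt hA).inv hB),
    Matrix.mul_assoc, nonsing_inv_mul_cancel_right _ _ hdet, mul_nonsing_inv_cancel_left _ _ hdet]

theorem riemannLog_riemannExp (hA : A.PosDef) (hX : X.IsHermitian) :
    riemannLog A (riemannExp A X) = X := by
  have hdet := (isUnit_iff_isUnit_det _).mp (posDef_cfc_sqrt hA).isUnit
  rw [riemannExp, riemannLog, ← Matrix.mul_assoc, mul_nonsing_inv_cancel_right _ _ hdet,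
    nonsing_inv_mul_cancel_left _ _ hdet, cfc_log_cfc_exp hX]

theorem trace_riemannExp_mul_cfc (f : ℝ → ℝ) (hA : A.PosDef) (X : Matrix n n 𝕜) :
    (riemannExp A X * cfc f A).trace = (cfc Real.exp X * cfc (fun x => x * f x) A).trace := by
  rw [← cfc_sqrt_mul_cfc_mul_cfc_sqrt f hA, riemannExp, Matrix.mul_assoc, Matrix.mul_assoc,
    trace_mul_comm]
  simp only [Matrix.mul_assoc]

theorem trace_inv_riemannExp_mul_cfc (f : ℝ → ℝ) (hA : A.PosDef) (hX : X.IsHermitian) :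
    ((riemannExp A X)⁻¹ * cfc f A).trace =
      (cfc Real.exp (-X) * cfc (fun x => x⁻¹ * f x) A).trace := by
  rw [← inv_cfc_sqrt_mul_cfc_mul_inv_cfc_sqrt f hA, riemannExp, Matrix.mul_inv_rev,
    Matrix.mul_inv_rev, cfc_exp_neg hX, Matrix.mul_assoc, trace_mul_comm]
  simp only [Matrix.mul_assoc]

theorem exists_unitary_mul_cfc_exp_mul_conjTranspose_eq_riemannExp {T : Matrix n n 𝕜}
    (hA : A.PosDef) (hT : T * Tᴴ = A) :
    ∃ W : unitary (Matrix n n 𝕜), ∀ X : Matrix n n 𝕜, X.IsHermitian →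
      T * cfc Real.exp X * Tᴴ = riemannExp A (W * X * star (W : Matrix n n 𝕜)) := by
  set S := cfc Real.sqrt A with hS
  have hdet := (isUnit_iff_isUnit_det _).mp (posDef_cfc_sqrt hA).isUnit
  have hSinv : (S⁻¹)ᴴ = S⁻¹ := (posDef_cfc_sqrt hA).inv.isHermitian.eq
  have hW : (S⁻¹ * T) * star (S⁻¹ * T) = 1 := by
    rw [star_eq_conjTranspose, conjTranspose_mul, hSinv, Matrix.mul_assoc, ← Matrix.mul_assoc T, hT,
      ← Matrix.mul_assoc, inv_cfc_sqrt_mul_mul_inv_cfc_sqrt hA]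
  have hT_eq : T = S * (S⁻¹ * T) := (mul_nonsing_inv_cancel_left _ _ hdet).symm
  have hT_star : Tᴴ = star (S⁻¹ * T) * S := by
    conv_lhs => rw [hT_eq, conjTranspose_mul, hS, (isHermitian_cfc _ A).eq]
    rfl
  refine ⟨⟨S⁻¹ * T, mul_eq_one_comm.mp hW, hW⟩, fun X hX => ?_⟩
  calc T * cfc Real.exp X * Tᴴ
      = (S * (S⁻¹ * T)) * cfc Real.exp X * (star (S⁻¹ * T) * S) := by rw [← hT_eq, ← hT_star]
    _ = S * ((S⁻¹ * T) * cfc Real.exp X * star (S⁻¹ * T)) * S := by simp only [Matrix.mul_assoc]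
    _ = riemannExp A _ := by rw [riemannExp, cfc_unitary_conj _ _ hX]

/-! ### Growth of the logarithm along a geodesic -/

theorem hasDerivAt_re_trace_cfc_exp_smul_sub_one_mul (hY : Y.IsHermitian) (M : Matrix n n 𝕜) :
    HasDerivAt (fun h : ℝ => RCLike.re ((cfc Real.exp (h • Y) - 1) * M).trace)
      (RCLike.re (Y * M).trace) 0 := by
  have hYM : RCLike.re (Y * M).trace = RCLike.re (cfc (fun x : ℝ => x) Y * M).trace := by
    rw [cfc_id' ℝ Y hY.isSelfAdjoint]
  simp only [hYM, Matrix.sub_mul, trace_sub, map_sub, cfc_exp_smul _ hY, re_trace_cfc_mul _ hY]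
  refine (HasDerivAt.fun_sum fun i _ => HasDerivAt.mul_const ?_ _).sub_const _
  simpa only [zero_mul, Real.exp_zero, one_mul] using
    ((hasDerivAt_id' (0 : ℝ)).mul_const (hY.eigenvalues i)).exp

theorem sq_norm_cfc (f : ℝ → ℝ) (A : Matrix n n 𝕜) :
    ‖cfc f A‖ ^ 2 = RCLike.re (cfc (fun x => f x ^ 2) A).trace := by
  rw [sq_frobenius_norm_eq_re_trace, (isHermitian_cfc f A).eq, cfc_mul_cfc]
  simp only [sq]

theorem abs_sq_norm_log_sub_le (hA : A.PosDef) (hB : B.PosDef) :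
    |‖cfc Real.log B‖ ^ 2 - ‖cfc Real.log A‖ ^ 2 -
        2 * (RCLike.re (B * cfc (fun a => a⁻¹ * Real.log a) A).trace -
          RCLike.re (cfc Real.log A).trace)| ≤
      RCLike.re (B * cfc (fun a => a⁻¹ * (1 + 2 * |Real.log a|)) A).trace +
        RCLike.re (B⁻¹ * cfc (fun a => a * (1 + 2 * |Real.log a|)) A).trace -
        2 * RCLike.re (cfc (fun a => 1 + 2 * |Real.log a|) A).trace := by
  have hB_id : cfc (fun b : ℝ => b) B = B := cfc_id' ℝ B hB.isHermitian.isSelfAdjoint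
  have hB_inv : cfc (fun b : ℝ => b⁻¹) B = B⁻¹ := by
    rw [← inv_cfc (f := fun b => b) hB.isHermitian fun b hb =>
      (hB.isStrictlyPositive.spectrum_pos hb).ne', hB_id]
  have hone : ∀ {M : Matrix n n 𝕜}, M.PosDef → cfc (fun _ : ℝ => (1 : ℝ)) M = 1 :=
    fun {M} hM => cfc_const_one ℝ M hM.isHermitian.isSelfAdjoint
  have hklein := abs_sum_mul_re_trace_cfc_mul_cfc_le (s := Finset.univ) (t := Finset.univ)
    (c := ![1, -1, -2, 2]) (f := ![fun b => Real.log b ^ 2, fun _ => 1, fun b => b, fun _ => 1])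
    (g := ![fun _ => 1, fun a => Real.log a ^ 2, fun a => a⁻¹ * Real.log a, Real.log])
    (c' := ![1, 1, -2]) (f' := ![fun b => b, fun b => b⁻¹, fun _ => 1])
    (g' := ![fun a => a⁻¹ * (1 + 2 * |Real.log a|), fun a => a * (1 + 2 * |Real.log a|),
      fun a => 1 + 2 * |Real.log a|])
    hB.isHermitian hA.isHermitian ?_
  · simp only [Fin.sum_univ_four, Fin.sum_univ_three, Matrix.cons_val, hB_id, hB_inv, hone hA,
      hone hB, Matrix.mul_one, Matrix.one_mul, ← sq_norm_cfc] at hklein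
    convert hklein using 2 <;> ring
  · intro b hb a ha
    have h := abs_sq_log_sub_sq_log_sub_le (hB.isStrictlyPositive.spectrum_pos hb)
      (hA.isStrictlyPositive.spectrum_pos ha)
    simp only [Fin.sum_univ_four, Fin.sum_univ_three, Matrix.cons_val]
    convert h using 2 <;> ring

theorem abs_sq_norm_log_riemannExp_sub_le (hA : A.PosDef) (hY : Y.IsHermitian) :
    |‖cfc Real.log (riemannExp A Y)‖ ^ 2 - (‖cfc Real.log A‖ ^ 2 +
        2 * RCLike.re ((cfc Real.exp Y - 1) * cfc Real.log A).trace)| ≤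
      RCLike.re ((cfc Real.exp Y - 1 + (cfc Real.exp (-Y) - 1)) *
        cfc (fun a => 1 + 2 * |Real.log a|) A).trace := by
  have hcancel : ∀ f : ℝ → ℝ, cfc (fun a => a * (a⁻¹ * f a)) A = cfc f A :=
    fun f => cfc_congr_of_posDef hA fun a ha => mul_inv_cancel_left₀ ha.ne' _
  have hcancel' : ∀ f : ℝ → ℝ, cfc (fun a => a⁻¹ * (a * f a)) A = cfc f A :=
    fun f => cfc_congr_of_posDef hA fun a ha => inv_mul_cancel_left₀ ha.ne' _
  have h := abs_sq_norm_log_sub_le hA (posDef_riemannExp hA hY)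
  rw [trace_riemannExp_mul_cfc _ hA, trace_riemannExp_mul_cfc _ hA,
    trace_inv_riemannExp_mul_cfc _ hA hY, hcancel, hcancel, hcancel'] at h
  convert h using 2
  all_goals
    simp only [Matrix.add_mul, Matrix.sub_mul, Matrix.one_mul, trace_add, trace_sub, map_add,
      map_sub]
    ring

theorem hasDerivAt_sq_norm_log_riemannExp_smul_zero (hA : A.PosDef) (hY : Y.IsHermitian) :
    HasDerivAt (fun h : ℝ => ‖cfc Real.log (riemannExp A (h • Y))‖ ^ 2)
      (2 * RCLike.re (Y * cfc Real.log A).trace) 0 := by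
  refine hasDerivAt_of_abs_sub_le (fun h => abs_sq_norm_log_riemannExp_sub_le hA
    (hY.smul (.all h))) ?_ ?_ ?_
  · set c := cfc (fun a => 1 + 2 * |Real.log a|) A
    have h := (hasDerivAt_re_trace_cfc_exp_smul_sub_one_mul hY c).fun_add
      (hasDerivAt_re_trace_cfc_exp_smul_sub_one_mul hY.neg c)
    simpa only [smul_neg, Matrix.add_mul, trace_add, map_add, Matrix.neg_mul, trace_neg, map_neg,
      add_neg_cancel] using h
  · simp only [zero_smul, neg_zero, cfc_apply_zero, Real.exp_zero, map_one, sub_self, add_zero,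
      Matrix.zero_mul, trace_zero, map_zero]
  · exact ((hasDerivAt_re_trace_cfc_exp_smul_sub_one_mul hY _).const_mul 2).const_add _

theorem exists_mul_cfc_exp_smul_mul_conjTranspose_eq_riemannExp {T : Matrix n n 𝕜} (hA : A.PosDef)
    (hT : T * Tᴴ = A) (hX : X.IsHermitian) :
    ∃ Y : Matrix n n 𝕜, Y.IsHermitian ∧ ‖Y‖ = ‖X‖ ∧
      ∀ t : ℝ, T * cfc Real.exp (t • X) * Tᴴ = riemannExp A (t • Y) := by
  obtain ⟨W, hW⟩ := exists_unitary_mul_cfc_exp_mul_conjTranspose_eq_riemannExp hA hT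
  refine ⟨W * X * star (W : Matrix n n 𝕜), isHermitian_mul_mul_conjTranspose _ hX,
    frobenius_norm_unitary_conj W X, fun t => ?_⟩
  rw [hW _ (hX.smul (.all t)), Matrix.mul_smul, Matrix.smul_mul]

-- The factor `T = √A * exp (t / 2 • X)` of the new base point turns the congruence defining the
-- geodesic into the exponential map there, up to a unitary rotation of the velocity.
theorem exists_riemannExp_add_smul (hA : A.PosDef) (hX : X.IsHermitian) (t : ℝ) :
    ∃ Y : Matrix n n 𝕜, Y.IsHermitian ∧ ‖Y‖ = ‖X‖ ∧
      ∀ h : ℝ, riemannExp A ((t + h) • X) = riemannExp (riemannExp A (t • X)) (h • Y) := by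
  set S := cfc Real.sqrt A with hS
  set E := cfc Real.exp ((t / 2) • X) with hE
  have hE_sq : E * E = cfc Real.exp (t • X) := by rw [hE, ← cfc_exp_add_smul _ _ hX, add_halves]
  have hST : (S * E)ᴴ = E * S := by
    rw [conjTranspose_mul, (isHermitian_cfc _ _).eq, (isHermitian_cfc _ _).eq]
  have hT : S * E * (S * E)ᴴ = riemannExp A (t • X) := by
    rw [hST, riemannExp, ← hE_sq]
    simp only [Matrix.mul_assoc, hS]
  obtain ⟨Y, hY, hYX, hY_exp⟩ := exists_mul_cfc_exp_smul_mul_conjTranspose_eq_riemannExp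
    (posDef_riemannExp hA (hX.smul (.all t))) hT hX
  refine ⟨Y, hY, hYX, fun h => ?_⟩
  have hexp : cfc Real.exp ((t + h) • X) = E * cfc Real.exp (h • X) * E := by
    rw [← cfc_exp_add_smul _ _ hX, ← cfc_exp_add_smul _ _ hX]
    congr 2
    ring
  rw [← hY_exp h, hST, riemannExp, hexp]
  simp only [Matrix.mul_assoc, hS]

theorem exists_hasDerivAt_sq_norm_log_riemannExp_smul (hA : A.PosDef) (hX : X.IsHermitian) (t : ℝ) :
    ∃ d : ℝ, d ≤ 2 * ‖X‖ * ‖cfc Real.log (riemannExp A (t • X))‖ ∧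
      HasDerivAt (fun s : ℝ => ‖cfc Real.log (riemannExp A (s • X))‖ ^ 2) d t := by
  obtain ⟨Y, hY, hYX, hrebase⟩ := exists_riemannExp_add_smul hA hX t
  set P := riemannExp A (t • X)
  have hP : P.PosDef := posDef_riemannExp hA (hX.smul (.all t))
  refine ⟨2 * RCLike.re (Y * cfc Real.log P).trace, ?_, ?_⟩
  · have h := re_trace_conjTranspose_mul_le Y (cfc Real.log P)
    rw [hY.eq, hYX] at h
    linarith
  · have h := hasDerivAt_sq_norm_log_riemannExp_smul_zero hP hY
    simp only [← hrebase] at h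
    rw [← sub_self t] at h
    simpa only [add_sub_cancel] using h.comp_sub_const t t

theorem norm_log_riemannExp_le (hA : A.PosDef) (hX : X.IsHermitian) :
    ‖cfc Real.log (riemannExp A X)‖ ≤ ‖cfc Real.log A‖ + ‖X‖ := by
  choose φ' hφ' hφ using exists_hasDerivAt_sq_norm_log_riemannExp_smul hA hX
  have h := sqrt_le_sqrt_add_mul_of_hasDerivAt_le zero_le_one (fun _ => sq_nonneg _) hφ
    (fun t => by rw [Real.sqrt_sq (norm_nonneg _)]; exact hφ' t) (norm_nonneg X)
  simpa only [Real.sqrt_sq (norm_nonneg _), one_smul, zero_smul, riemannExp_zero hA, sub_zero,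
    mul_one] using h

/-! ### The metric axioms -/

theorem norm_riemannLog_comm (hA : A.PosDef) (hB : B.PosDef) :
    ‖riemannLog A B‖ = ‖riemannLog B A‖ := by
  obtain ⟨Y, hY, hYX, hrebase⟩ :=
    exists_riemannExp_add_smul hA (isHermitian_riemannLog A B) 1
  have hA_eq : A = riemannExp B (-Y) := by
    have h := hrebase (-1)
    rwa [add_neg_cancel, zero_smul, riemannExp_zero hA, one_smul, riemannExp_riemannLog hA hB,
      neg_one_smul] at h
  rw [← hYX, ← norm_neg Y]
  conv_rhs => rw [hA_eq, riemannLog_riemannExp hB hY.neg]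

theorem norm_riemannLog_eq_zero_iff (hA : A.PosDef) (hB : B.PosDef) :
    ‖riemannLog A B‖ = 0 ↔ A = B := by
  rw [norm_eq_zero]
  constructor
  · intro h
    rw [← riemannExp_riemannLog hA hB, h, riemannExp_zero hA]
  · rintro rfl
    simpa only [riemannExp_zero hA] using riemannLog_riemannExp hA isHermitian_zero

theorem norm_riemannLog_triangle (hA : A.PosDef) (hB : B.PosDef) (hC : C.PosDef) :
    ‖riemannLog A C‖ ≤ ‖riemannLog A B‖ + ‖riemannLog B C‖ := by
  set T := (cfc Real.sqrt A)⁻¹ * cfc Real.sqrt B with hT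
  have hT_star : Tᴴ = cfc Real.sqrt B * (cfc Real.sqrt A)⁻¹ := by
    rw [hT, conjTranspose_mul, (isHermitian_cfc _ _).eq, (posDef_cfc_sqrt hA).inv.isHermitian.eq]
  have hconj : ∀ X : Matrix n n 𝕜, T * cfc Real.exp X * Tᴴ =
      (cfc Real.sqrt A)⁻¹ * riemannExp B X * (cfc Real.sqrt A)⁻¹ := by
    intro X
    rw [hT_star, hT, riemannExp]
    simp only [Matrix.mul_assoc]
  have hTT : T * Tᴴ = (cfc Real.sqrt A)⁻¹ * B * (cfc Real.sqrt A)⁻¹ := by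
    conv_rhs => rw [← cfc_sqrt_mul_cfc_sqrt hB]
    rw [hT_star, hT]
    simp only [Matrix.mul_assoc]
  have hP := posDef_mul_mul_self (posDef_cfc_sqrt hA).inv hB
  obtain ⟨Y, hY, hYX, hexp⟩ := exists_mul_cfc_exp_smul_mul_conjTranspose_eq_riemannExp
    hP hTT (isHermitian_riemannLog B C)
  have hC_eq := hexp 1
  rw [one_smul, one_smul, hconj, riemannExp_riemannLog hB hC] at hC_eq
  rw [← hYX, riemannLog, hC_eq]
  exact norm_log_riemannExp_le hP hY

theorem matFun_eq_cfc {m : ℕ} (f : ℝ → ℝ) (A : Matrix (Fin m) (Fin m) ℂ) :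
    matFun f A = cfc f A := by
  by_cases hA : A.IsHermitian
  · rw [cfc_eq_eigenvectorUnitary_mul f hA, matFun, dif_pos hA]
    rfl
  · rw [matFun, dif_neg hA]
    exact (cfc_apply_of_not_predicate A hA).symm

theorem rdist_eq_norm_riemannLog {m : ℕ} (A B : Matrix (Fin m) (Fin m) ℂ) :
    rdist A B = ‖riemannLog A B‖ := by
  rw [← Real.sqrt_sq (norm_nonneg (riemannLog A B)), sq_frobenius_norm_eq_re_trace]
  simp only [riemannLog, rdist, fnorm, mlog, msqrt, matFun_eq_cfc]
  rfl

theorem rdist_is_metric_general {n 𝕜 : Type*} [Fintype n] [DecidableEq n] [RCLike 𝕜] :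
    (∀ A B : Matrix n n 𝕜, 0 ≤ ‖riemannLog A B‖) ∧
    (∀ A B : Matrix n n 𝕜, A.PosDef → B.PosDef → (‖riemannLog A B‖ = 0 ↔ A = B)) ∧
    (∀ A B : Matrix n n 𝕜, A.PosDef → B.PosDef → ‖riemannLog A B‖ = ‖riemannLog B A‖) ∧
    (∀ A B C : Matrix n n 𝕜, A.PosDef → B.PosDef → C.PosDef →
      ‖riemannLog A C‖ ≤ ‖riemannLog A B‖ + ‖riemannLog B C‖) :=
  ⟨fun _ _ => norm_nonneg _, fun _ _ => norm_riemannLog_eq_zero_iff,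
    fun _ _ => norm_riemannLog_comm, fun _ _ _ => norm_riemannLog_triangle⟩

end Matrices

/-- `δ(A,B) = ‖log(A^{-1/2} B A^{-1/2})‖₂` is a metric on the positive definite matrices. -/
theorem rdist_is_metric {m : ℕ} :
    (∀ A B : Matrix (Fin m) (Fin m) ℂ, A.PosDef → B.PosDef → 0 ≤ rdist A B) ∧
    (∀ A B : Matrix (Fin m) (Fin m) ℂ, A.PosDef → B.PosDef → (rdist A B = 0 ↔ A = B)) ∧
    (∀ A B : Matrix (Fin m) (Fin m) ℂ, A.PosDef → B.PosDef → rdist A B = rdist B A) ∧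
    (∀ A B C : Matrix (Fin m) (Fin m) ℂ, A.PosDef → B.PosDef → C.PosDef →
      rdist A C ≤ rdist A B + rdist B C) := by
  simp only [rdist_eq_norm_riemannLog]
  exact rdist_is_metric_general.imp_left fun h A B _ _ => h A B
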